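/- arXiv:0801.0570 — 2 statements merged into one kernel-verified Lean document; each statement's English description precedes it below -/
import Mathlib

section
/- Let A be a real n×n matrix, B a real n×m matrix, k ≥ 1, and Γ = [B AB … A^{k−1}B] the n×km matrix with blocks A^i B. Assume P is a km×n real matrix with Γ P = I_n, let ‖P‖ denote its operator norm with respect to infinity norms, and let 0 ≤ l < 1 and 0 ≤ ε be such that ε·‖P‖ ≤ 1 − l. Then for every x_0 ∈ ℝ^n, every ũ_1 ∈ ℝ^{km} with ‖ũ_1‖_∞ ≤ l, and every x_2 ∈ ℝ^n with ‖x_2 − (A^k x_0 + Γ ũ_1)‖_∞ ≤ ε, there exists ũ_2 ∈ ℝ^{km} with ‖ũ_2‖_∞ ≤ 1 and x_2 = A^k x_0 + Γ ũ_2. -/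
/-!
The deviation `x₂ - (A ^ k x₀ + Γ ũ₁)` can be cancelled by adding its image under `P` to the input
`ũ₁`, because `Γ P = 1`. This correction has norm at most `ε ‖P‖ ≤ 1 - l`, exactly the margin that
`‖ũ₁‖ ≤ l` leaves below the input bound `1`.
-/

open Function Metric Set

theorem rightInverse_mulVecLin_of_mul_eq_one {R m n : Type*} [CommSemiring R]
    [Fintype m] [Fintype n] [DecidableEq m] {M : Matrix m n R} {N : Matrix n m R}
    (h : M * N = 1) : RightInverse N.mulVecLin M.mulVecLin := fun v ↦ by
  rw [Matrix.mulVecLin_apply, Matrix.mulVecLin_apply, Matrix.mulVec_mulVec, h, Matrix.one_mulVec]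

section RightInverse

variable {𝕜 E F : Type*} [NontriviallyNormedField 𝕜]
  [SeminormedAddCommGroup E] [NormedSpace 𝕜 E] [SeminormedAddCommGroup F] [NormedSpace 𝕜 F]
  {T : F →ₗ[𝕜] E} {S : E →L[𝕜] F}

theorem surjOn_closedBall_of_rightInverse (hS : RightInverse S T) (u : F) (ε : ℝ) :
    SurjOn T (closedBall u (ε * ‖S‖)) (closedBall (T u) ε) := by
  intro x hx
  refine ⟨u + S (x - T u), ?_, ?_⟩
  · rw [mem_closedBall_iff_norm] at hx
    rw [mem_closedBall_iff_norm, add_sub_cancel_left, mul_comm]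
    exact S.le_opNorm_of_le hx
  · rw [map_add, hS, add_sub_cancel]

theorem stmt_6_general (hS : RightInverse S T) {l r ε : ℝ} (hε : ε * ‖S‖ ≤ r - l)
    (c : E) {u₁ : F} (hu₁ : ‖u₁‖ ≤ l) {x₂ : E} (hx₂ : ‖x₂ - (c + T u₁)‖ ≤ ε) :
    ∃ u₂ : F, ‖u₂‖ ≤ r ∧ x₂ = c + T u₂ := by
  have hx₂_mem : x₂ - c ∈ closedBall (T u₁) ε := by
    rwa [mem_closedBall_iff_norm, sub_sub]
  have hball : closedBall u₁ (ε * ‖S‖) ⊆ closedBall 0 r :=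
    closedBall_subset_closedBall' (by rw [dist_zero_right]; linarith)
  obtain ⟨u₂, hu₂, hTu₂⟩ := surjOn_closedBall_of_rightInverse hS u₁ ε hx₂_mem
  exact ⟨u₂, mem_closedBall_zero_iff.mp (hball hu₂), eq_add_of_sub_eq' hTu₂.symm⟩

end RightInverse

/-- paper's Proposition 3: with `Γ = [B AB … A^(k-1)B]` (indexed
by block pairs `(i, j) ∈ Fin k × Fin m`, entry `(A^i B) r j`), `P` a right
inverse of `Γ` with `∞`-operator norm `‖P‖`, `0 ≤ l < 1`, `0 ≤ ε` and
`ε ‖P‖ ≤ 1 - l`: any `x₂` within `ε` (in `‖·‖_∞`) of a point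
`A^k x₀ + Γ ũ₁` reachable with `‖ũ₁‖_∞ ≤ l` is itself of the form
`A^k x₀ + Γ ũ₂` with `‖ũ₂‖_∞ ≤ 1`. -/
theorem stmt_6 (n m k : ℕ) (hk : 1 ≤ k)
    (A : Matrix (Fin n) (Fin n) ℝ) (B : Matrix (Fin n) (Fin m) ℝ)
    (Γ : Matrix (Fin n) (Fin k × Fin m) ℝ)
    (hΓ : ∀ (r : Fin n) (q : Fin k × Fin m), Γ r q = (A ^ (q.1 : ℕ) * B) r q.2)
    (P : Matrix (Fin k × Fin m) (Fin n) ℝ) (hP : Γ * P = 1)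
    (l ε : ℝ) (hl0 : 0 ≤ l) (hl1 : l < 1) (hε : 0 ≤ ε)
    (hεP : ε * ‖LinearMap.toContinuousLinearMap P.mulVecLin‖ ≤ 1 - l)
    (x₀ : Fin n → ℝ) (u₁ : Fin k × Fin m → ℝ) (hu₁ : ‖u₁‖ ≤ l)
    (x₂ : Fin n → ℝ) (hx₂ : ‖x₂ - ((A ^ k).mulVec x₀ + Γ.mulVec u₁)‖ ≤ ε) :
    ∃ u₂ : Fin k × Fin m → ℝ, ‖u₂‖ ≤ 1 ∧ x₂ = (A ^ k).mulVec x₀ + Γ.mulVec u₂ :=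
  stmt_6_general (S := LinearMap.toContinuousLinearMap P.mulVecLin)
    (rightInverse_mulVecLin_of_mul_eq_one hP) hεP ((A ^ k).mulVec x₀) hu₁ hx₂
end

section
/- Let A be a real n×n matrix, B a real n×m matrix, k ≥ 1, Γ = [B AB … A^{k−1}B], and let P be a km×n real matrix with Γ P = I_n and P ≠ 0, with ‖P‖ its ∞-operator norm. Then for every x_0 ∈ ℝ^n and every l > 0, the set of states reachable in k steps from x_0 with inputs of norm at most l, namely {A^k x_0 + Γ ũ : ‖ũ‖_∞ ≤ l}, contains the closed infinity-norm ball of radius l/‖P‖ centered at A^k x_0. -/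
/-! A bounded linear right inverse `g` of the map from inputs to displacements picks out, for each
target `x`, the input `g (x - c)`: it steers `c` to `x` and has norm at most `‖g‖ * ‖x - c‖`. -/

open Metric

section RightInverse

variable {𝕜 E F : Type*} [NontriviallyNormedField 𝕜]
  [SeminormedAddCommGroup E] [NormedSpace 𝕜 E] [SeminormedAddCommGroup F] [NormedSpace 𝕜 F]
  {f : E → F} {g : F →L[𝕜] E}

theorem surjOn_closedBall_zero_of_rightInverse (hfg : Function.RightInverse g f) (r : ℝ) :
    Set.SurjOn f (closedBall 0 (‖g‖ * r)) (closedBall 0 r) := by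
  have hg : Set.MapsTo g (closedBall 0 r) (closedBall 0 (‖g‖ * r)) := by
    simpa only [map_zero, coe_nnnorm] using g.lipschitz.mapsTo_closedBall 0 r
  exact (hfg.rightInvOn _).surjOn hg

theorem stmt_7_general (hfg : Function.RightInverse g f) (hg : ‖g‖ ≠ 0) (c : F) (l : ℝ) :
    closedBall c (l / ‖g‖) ⊆ {x : F | ∃ u : E, ‖u‖ ≤ l ∧ x = c + f u} := by
  intro x hx
  have hx_sub : x - c ∈ closedBall 0 (l / ‖g‖) := by
    rwa [mem_closedBall_zero_iff, ← mem_closedBall_iff_norm]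
  obtain ⟨u, hu, hfu⟩ := surjOn_closedBall_zero_of_rightInverse hfg _ hx_sub
  rw [mul_div_cancel₀ _ hg, mem_closedBall_zero_iff] at hu
  exact ⟨u, hu, (add_eq_of_eq_sub' hfu).symm⟩

end RightInverse

theorem rightInverse_mulVec_of_mul_eq_one {R ι κ : Type*} [Semiring R] [Fintype ι] [Fintype κ]
    [DecidableEq ι] {M : Matrix ι κ R} {N : Matrix κ ι R} (h : M * N = 1) :
    Function.RightInverse N.mulVec M.mulVec := fun v => by
  rw [Matrix.mulVec_mulVec, h, Matrix.one_mulVec]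

/-- with `Γ = [B AB … A^(k-1)B]`, `P ≠ 0` a right inverse of `Γ`
with `∞`-operator norm `‖P‖`, the `k`-step reachable set
`{A^k x₀ + Γ ũ : ‖ũ‖_∞ ≤ l}` contains the closed `∞`-ball of radius `l / ‖P‖`
centered at `A^k x₀`. -/
theorem stmt_7 (n m k : ℕ) (hk : 1 ≤ k)
    (A : Matrix (Fin n) (Fin n) ℝ) (B : Matrix (Fin n) (Fin m) ℝ)
    (Γ : Matrix (Fin n) (Fin k × Fin m) ℝ)
    (hΓ : ∀ (r : Fin n) (q : Fin k × Fin m), Γ r q = (A ^ (q.1 : ℕ) * B) r q.2)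
    (P : Matrix (Fin k × Fin m) (Fin n) ℝ) (hP : Γ * P = 1) (hP0 : P ≠ 0)
    (x₀ : Fin n → ℝ) (l : ℝ) (hl : 0 < l) :
    Metric.closedBall ((A ^ k).mulVec x₀)
        (l / ‖LinearMap.toContinuousLinearMap P.mulVecLin‖)
      ⊆ {x : Fin n → ℝ | ∃ u : Fin k × Fin m → ℝ, ‖u‖ ≤ l ∧
          x = (A ^ k).mulVec x₀ + Γ.mulVec u} :=
  stmt_7_general (rightInverse_mulVec_of_mul_eq_one hP)
    (norm_ne_zero_iff.mpr <| by simpa [← Matrix.toLin'_apply'] using hP0) _ l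
end
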